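/- The Heisenberg group ℋ₃(ℤ) belongs to the class ℬ_𝔢, where 𝔢 is the exponential function 𝔢(n) = exp(n). -/

import Mathlib

namespace CAG

/-- The convolution `w₁ ⊗ w₂` of two words, over the padded alphabet
`(Σ ∪ {⋄})²`, modelled as `Option α × Option α` where `none` is the padding symbol `⋄`. -/
def conv {α : Type*} : List α → List α → List (Option α × Option α)
  | [], [] => []
  | a :: as, [] => (some a, none) :: conv as []
  | [], b :: bs => (none, some b) :: conv [] bs
  | a :: as, b :: bs => (some a, some b) :: conv as bs

/-- A binary relation on words is regular if the language of convolutions of its pairs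
is a regular language. -/
def IsRegularRel {α : Type*} (R : Set (List α × List α)) : Prop :=
  Language.IsRegular {w | ∃ p ∈ R, w = conv p.1 p.2}

variable {G : Type*} [Group G]

/-- The alphabet `S = A ∪ A⁻¹` associated to a generating set `A ⊆ G`. -/
def Alph (A : Set G) : Type _ := {x : G // x ∈ A ∪ A⁻¹}

/-- The canonical evaluation map `π : S* → G`. -/
def eval (A : Set G) (w : List (Alph A)) : G := (w.map Subtype.val).prod

/-- The word length `d_A(g)` of `g` with respect to the generating set `A`. -/
noncomputable def wordLength (A : Set G) (g : G) : ℕ :=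
  sInf {n | ∃ w : List (Alph A), eval A w = g ∧ w.length = n}

/-- The distance `d_A(g₁, g₂)` in the Cayley graph of `G` with respect to `A`. -/
noncomputable def cayleyDist (A : Set G) (g₁ g₂ : G) : ℕ := wordLength A (g₁⁻¹ * g₂)

/-- `ψ : L → G` is a Cayley automatic representation of `G` (w.r.t. the
generating set `A`): `L ⊆ S*` is regular, `ψ` is a bijection from `L` onto `G`, and for every
`a ∈ A` the relation `R_a = {(ψ⁻¹(g), ψ⁻¹(g·a)) : g ∈ G}` is regular. -/
def IsCayleyAutomaticRep (A : Set G) (L : Language (Alph A)) (ψ : List (Alph A) → G) : Prop :=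
  Language.IsRegular L ∧ Set.BijOn ψ L Set.univ ∧
    ∀ a ∈ A, IsRegularRel {p : List (Alph A) × List (Alph A) |
      p.1 ∈ L ∧ p.2 ∈ L ∧ ψ p.2 = ψ p.1 * a}

/-- `G` is Cayley automatic with respect to the generating set `A`. -/
def IsCayleyAutomatic (A : Set G) : Prop :=
  ∃ (L : Language (Alph A)) (ψ : List (Alph A) → G), IsCayleyAutomaticRep A L ψ

/-- `G` is automatic (in the sense of Thurston) with respect to the generating set `A`:
there is a regular language `L ⊆ S*` on which the canonical evaluation map `π` is a bijection
onto `G` and all the relations `R_a`, `a ∈ A`, are regular. -/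
def IsAutomatic (A : Set G) : Prop :=
  ∃ L : Language (Alph A), IsCayleyAutomaticRep A L (eval A)

/-- The family `𝔉` of non-decreasing, non-negative real valued functions defined on a
final segment `[Q, ∞)` of `ℕ` (values below `Q` are irrelevant junk values). -/
structure FFun where
  Q : ℕ
  toFun : ℕ → ℝ
  nonneg : ∀ n, Q ≤ n → 0 ≤ toFun n
  mono : ∀ m n, Q ≤ m → m ≤ n → toFun m ≤ toFun n

/-- `h ⪯ f` : there are positive integers `K, M, N`, with `[N,∞)` contained in the domains of
`h` and `f`, such that `h(n) ≤ K·f(M·n)` for all `n ≥ N`. -/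
def FFun.Preceq (h f : FFun) : Prop :=
  ∃ K M N : ℕ, 0 < K ∧ 0 < M ∧ 0 < N ∧ h.Q ≤ N ∧ f.Q ≤ N ∧
    ∀ n, N ≤ n → h.toFun n ≤ K * f.toFun (M * n)

/-- `h ≍ f` iff `h ⪯ f` and `f ⪯ h`. -/
def FFun.Equiv (h f : FFun) : Prop := h.Preceq f ∧ f.Preceq h

/-- `h ≺ f` iff `h ⪯ f` and not `h ≍ f`. -/
def FFun.Prec (h f : FFun) : Prop := h.Preceq f ∧ ¬ h.Equiv f

/-- `G ∈ ℬ_f` with respect to the generating set `A`: there is a Cayley automatic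
representation `ψ : L → G` such that the function
`h(n) = max{d_A(π(w), ψ(w)) : w ∈ L, |w| ≤ n}` satisfies `h ⪯ f`
(stated equivalently: for some positive `K, M, N` with `N ≥ Q_f`, every `w ∈ L` with `|w| ≤ n`
and `n ≥ N` satisfies `d_A(π(w), ψ(w)) ≤ K·f(M·n)`). -/
def InB (A : Set G) (f : FFun) : Prop :=
  ∃ (L : Language (Alph A)) (ψ : List (Alph A) → G),
    IsCayleyAutomaticRep A L ψ ∧
    ∃ K M N : ℕ, 0 < K ∧ 0 < M ∧ 0 < N ∧ f.Q ≤ N ∧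
      ∀ n, N ≤ n → ∀ w ∈ L, w.length ≤ n →
        (cayleyDist A (eval A w) (ψ w) : ℝ) ≤ K * f.toFun (M * n)

/-- The identity function `𝔦(n) = n` as an element of `𝔉`. -/
def identF : FFun where
  Q := 1
  toFun n := n
  nonneg n _ := by positivity
  mono m n _ h := by simpa using (Nat.cast_le (α := ℝ)).mpr h

/-- The exponential function `𝔢(n) = exp n` as an element of `𝔉`. -/
noncomputable def expF : FFun where
  Q := 1
  toFun n := Real.exp n
  nonneg n _ := (Real.exp_pos n).le
  mono m n _ h := Real.exp_le_exp.mpr (by exact_mod_cast h)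

end CAG
namespace CAG

/-- The Heisenberg group `ℋ₃(ℤ)` of `3×3` upper unitriangular integer matrices, an element
being identified with the triple `(x, y, z)` of its upper-right entries, with multiplication
`(x,y,z)·(x',y',z') = (x+x', y+y', z+z'+x·y')`. -/
@[ext] structure Heis where
  x : ℤ
  y : ℤ
  z : ℤ

instance : Mul Heis := ⟨fun g h => ⟨g.x + h.x, g.y + h.y, g.z + h.z + g.x * h.y⟩⟩
instance : One Heis := ⟨⟨0, 0, 0⟩⟩
instance : Inv Heis := ⟨fun g => ⟨-g.x, -g.y, -g.z + g.x * g.y⟩⟩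

lemma Heis.mul_def (g h : Heis) :
    g * h = ⟨g.x + h.x, g.y + h.y, g.z + h.z + g.x * h.y⟩ := rfl
lemma Heis.one_def : (1 : Heis) = ⟨0, 0, 0⟩ := rfl
lemma Heis.inv_def (g : Heis) : g⁻¹ = ⟨-g.x, -g.y, -g.z + g.x * g.y⟩ := rfl

instance : Group Heis where
  mul_assoc a b c := by
    simp only [Heis.mul_def]
    ext <;> dsimp <;> ring
  one_mul a := by simp only [Heis.mul_def, Heis.one_def]; ext <;> dsimp <;> ring
  mul_one a := by simp only [Heis.mul_def, Heis.one_def]; ext <;> dsimp <;> ring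
  inv_mul_cancel a := by
    simp only [Heis.mul_def, Heis.inv_def, Heis.one_def]
    ext <;> dsimp <;> ring

/-- The generator `s = (1,0,0)` of `ℋ₃(ℤ)`. -/
def Heis.s : Heis := ⟨1, 0, 0⟩
/-- The generator `p = (0,1,0)` of `ℋ₃(ℤ)`. -/
def Heis.p : Heis := ⟨0, 1, 0⟩
/-- The generator `q = (0,0,1)` of `ℋ₃(ℤ)`. -/
def Heis.q : Heis := ⟨0, 0, 1⟩

end CAG

namespace CAG

/-! ### Regularity from a finite family of languages closed under derivatives -/

/-- A language lying in a finite family of languages that is closed under derivatives by letters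
is regular. -/
lemma isRegular_of_family {α : Type*} (F : Set (Language α)) (hF : F.Finite)
    (hstep : ∀ K ∈ F, ∀ a : α, ∃ K' ∈ F, ∀ y : List α, a :: y ∈ K ↔ y ∈ K')
    (K : Language α) (hK : K ∈ F) : K.IsRegular := by
  refine Language.IsRegular.of_finite_range_leftQuotient (hF.subset ?_)
  rintro _ ⟨x, rfl⟩
  induction x generalizing K with
  | nil => simpa using hK
  | cons a x ih =>
    obtain ⟨K', hK', h⟩ := hstep K hK a
    have : K.leftQuotient (a :: x) = K'.leftQuotient x := by
      ext y
      exact h (x ++ y)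
    rw [this]
    exact ih K' hK'

/-- The language of convolutions of a relation. -/
def convLang {α : Type*} (P : Set (List α × List α)) : Language (Option α × Option α) :=
  {w | ∃ p ∈ P, w = conv p.1 p.2}

lemma mem_convLang {α : Type*} (P : Set (List α × List α)) (w : List (Option α × Option α)) :
    w ∈ convLang P ↔ ∃ u v, (u, v) ∈ P ∧ w = conv u v := by
  constructor
  · rintro ⟨⟨u, v⟩, h, rfl⟩; exact ⟨u, v, h, rfl⟩
  · rintro ⟨u, v, h, rfl⟩; exact ⟨(u, v), h, rfl⟩

lemma convLang_cons {α : Type*} (P : Set (List α × List α)) (y : List (Option α × Option α))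
    (a b : Option α) :
    (a, b) :: y ∈ convLang P ↔ y ∈ convLang
      {p | (∃ a' b', a = some a' ∧ b = some b' ∧ (a' :: p.1, b' :: p.2) ∈ P) ∨
        (∃ a', a = some a' ∧ b = none ∧ p.2 = [] ∧ (a' :: p.1, []) ∈ P) ∨
        (∃ b', a = none ∧ b = some b' ∧ p.1 = [] ∧ ([], b' :: p.2) ∈ P)} := by
  rw [mem_convLang, mem_convLang]
  constructor
  · rintro ⟨u, v, h, e⟩
    rcases u with _ | ⟨c, u⟩ <;> rcases v with _ | ⟨d, v⟩ <;>
      simp only [conv, List.cons.injEq, Prod.mk.injEq, reduceCtorEq] at e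
    · obtain ⟨⟨rfl, rfl⟩, rfl⟩ := e
      exact ⟨[], v, Or.inr (Or.inr ⟨d, rfl, rfl, rfl, h⟩), rfl⟩
    · obtain ⟨⟨rfl, rfl⟩, rfl⟩ := e
      exact ⟨u, [], Or.inr (Or.inl ⟨c, rfl, rfl, rfl, h⟩), rfl⟩
    · obtain ⟨⟨rfl, rfl⟩, rfl⟩ := e
      exact ⟨u, v, Or.inl ⟨c, d, rfl, rfl, h⟩, rfl⟩
  · rintro ⟨u, v, h, rfl⟩
    rcases h with ⟨c, d, rfl, rfl, h⟩ | ⟨c, rfl, rfl, h1, h⟩ | ⟨d, rfl, rfl, h1, h⟩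
    · exact ⟨c :: u, d :: v, h, by simp [conv]⟩
    · simp only at h1; subst h1
      exact ⟨c :: u, [], h, by simp [conv]⟩
    · simp only at h1; subst h1
      exact ⟨[], d :: v, h, by simp [conv]⟩

/-! ### Digits and values -/

/-- The value of a word: the digits of the three coordinates in base `6` are interleaved. -/
def val {D : Type*} (dig : D → ℤ) : List D → Heis
  | [] => ⟨0, 0, 0⟩
  | a :: w => ⟨dig a + 6 * (val dig w).z, (val dig w).x, (val dig w).y⟩

/-- `ok dig b w`: the word `w` does not end in the digit zero; the empty word is
accepted iff `b` is true. -/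
def ok {D : Type*} (dig : D → ℤ) : Prop → List D → Prop
  | b, [] => b
  | _, a :: w => ok dig (dig a ≠ 0) w

section
variable {D : Type*} (dig : D → ℤ)

lemma eq_nil_of_val (hr : ∀ a, -2 ≤ dig a ∧ dig a ≤ 3)
    (b : Prop) (w : List D) (hw : ok dig b w) (h : val dig w = ⟨0, 0, 0⟩) :
    w = [] := by
  induction w generalizing b with
  | nil => rfl
  | cons a w ih =>
    simp only [val, Heis.mk.injEq] at h
    have := hr a
    have h0 : val dig w = ⟨0, 0, 0⟩ := by
      ext
      · exact h.2.1
      · exact h.2.2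
      · dsimp; omega
    have hw' : ok dig (dig a ≠ 0) w := hw
    have e := ih _ hw' h0
    subst e
    simp only [val, ok] at h hw'
    omega

lemma val_inj (hr : ∀ a, -2 ≤ dig a ∧ dig a ≤ 3)
    (hinj : Function.Injective dig)
    (b b' : Prop) (u v : List D) (hu : ok dig b u) (hv : ok dig b' v)
    (h : val dig u = val dig v) : u = v := by
  induction u generalizing b b' v with
  | nil => exact (eq_nil_of_val dig hr b' v hv (by rw [← h]; rfl)).symm
  | cons a u ih =>
    cases v with
    | nil => exact eq_nil_of_val dig hr b _ hu (by rw [h]; rfl)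
    | cons c v =>
      simp only [val, Heis.mk.injEq] at h
      have h1 := hr a
      have h2 := hr c
      have e : dig a = dig c := by omega
      have := ih _ _ v hu hv (by
        ext
        · exact h.2.1
        · exact h.2.2
        · omega)
      rw [this, hinj e]

lemma ok_of_ne {b b' : Prop} {w : List D} (h : ok dig b w) (hw : w = [] → b') : ok dig b' w := by
  cases w with
  | nil => exact hw rfl
  | cons a w => exact h

lemma val_surj (hsurj : ∀ n : ℤ, -2 ≤ n → n ≤ 3 → ∃ a, dig a = n)
    (n : ℕ) : ∀ V : Heis, 3 * V.x.natAbs + 4 * V.y.natAbs + 5 * V.z.natAbs ≤ n →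
    ∃ w, ok dig True w ∧ val dig w = V := by
  induction n with
  | zero =>
    intro V hV
    refine ⟨[], trivial, ?_⟩
    ext <;> simp only [val] <;> omega
  | succ n ih =>
    intro V hV
    by_cases h0 : V = ⟨0, 0, 0⟩
    · exact ⟨[], trivial, by rw [h0]; rfl⟩
    have h0' : ¬ (V.x = 0 ∧ V.y = 0 ∧ V.z = 0) := fun h => h0 (by
      ext
      · exact h.1
      · exact h.2.1
      · exact h.2.2)
    obtain ⟨a, ha⟩ := hsurj ((V.x + 2) % 6 - 2) (by omega) (by omega)
    obtain ⟨w, hw, hv⟩ := ih ⟨V.y, V.z, (V.x + 2) / 6⟩ (by dsimp; omega)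
    refine ⟨a :: w, ?_, ?_⟩
    · change ok dig (dig a ≠ 0) w
      refine ok_of_ne dig hw ?_
      rintro rfl
      simp only [val, Heis.mk.injEq] at hv
      omega
    · simp only [val, hv]
      ext <;> dsimp
      omega

lemma val_bound (hr : ∀ a, -2 ≤ dig a ∧ dig a ≤ 3)
    (w : List D) : |(val dig w).x| ≤ 6 ^ w.length - 1 ∧
    |(val dig w).y| ≤ 6 ^ w.length - 1 ∧ |(val dig w).z| ≤ 6 ^ w.length - 1 := by
  induction w with
  | nil => simp [val]
  | cons a w ih =>
    have := hr a
    simp only [val, List.length_cons, pow_succ, abs_le] at *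
    have h1 : (1 : ℤ) ≤ 6 ^ w.length := one_le_pow₀ (by norm_num)
    generalize (6 : ℤ) ^ w.length = B at *
    omega

/-- The language of the representation. -/
def lang (b : Prop) : Language D := {w | ok dig b w}

lemma lang_regular : (lang dig True).IsRegular := by
  refine isRegular_of_family (Set.range (lang dig)) (Set.finite_range _) ?_ _ ⟨_, rfl⟩
  rintro _ ⟨b, rfl⟩ a
  exact ⟨_, ⟨(dig a ≠ 0), rfl⟩, fun y => Iff.rfl⟩

/-- Parameters of an affine relation between triples. -/
abbrev St := (ℤ × ℤ × ℤ) × (ℤ × ℤ × ℤ)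

/-- The affine relation. -/
def Aff (s : St) (U V : Heis) : Prop :=
  V.x = U.x + s.1.1 * U.y + s.2.1 ∧ V.y = U.y + s.1.2.1 * U.z + s.2.2.1 ∧
    V.z = U.z + s.1.2.2 * U.x + s.2.2.2

/-- Valid parameters. -/
def Valid (s : St) : Prop :=
  (s.1.1 = 0 ∧ s.1.2.1 = 0 ∧ (s.1.2.2 = 0 ∨ s.1.2.2 = 1) ∧
    |s.2.1| ≤ 1 ∧ |s.2.2.1| ≤ 1 ∧ |s.2.2.2| ≤ 1) ∨
  (s.1.1 = 0 ∧ s.1.2.1 = 6 ∧ s.1.2.2 = 0 ∧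
    |s.2.1| ≤ 1 ∧ |s.2.2.1| ≤ 4 ∧ |s.2.2.2| ≤ 1) ∨
  (s.1.1 = 6 ∧ s.1.2.1 = 0 ∧ s.1.2.2 = 0 ∧
    |s.2.1| ≤ 4 ∧ |s.2.2.1| ≤ 1 ∧ |s.2.2.2| ≤ 1)

lemma valid_finite : {s | Valid s}.Finite := by
  refine (Set.finite_Icc (((-10, -10, -10), (-10, -10, -10)) : St)
    ((10, 10, 10), (10, 10, 10))).subset ?_
  rintro ⟨⟨k1, k2, k3⟩, c1, c2, c3⟩ h
  simp only [Set.mem_ofPred_eq, Valid, abs_le] at h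
  simp only [Set.mem_Icc, Prod.mk_le_mk]
  omega

lemma aff_step (s : St) (hs : Valid s) (a b : ℤ) (ha : -2 ≤ a ∧ a ≤ 3) (hb : -2 ≤ b ∧ b ≤ 3) :
    (∃ s', Valid s' ∧ ∀ U V : Heis,
      Aff s ⟨a + 6 * U.z, U.x, U.y⟩ ⟨b + 6 * V.z, V.x, V.y⟩ ↔ Aff s' U V) ∨
    (∀ U V : Heis, ¬ Aff s ⟨a + 6 * U.z, U.x, U.y⟩ ⟨b + 6 * V.z, V.x, V.y⟩) := by
  obtain ⟨⟨k1, k2, k3⟩, c1, c2, c3⟩ := s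
  simp only [Valid, abs_le] at hs
  by_cases hd : (a + c1 - b) % 6 = 0
  · left
    rcases hs with ⟨rfl, rfl, h3, h⟩ | ⟨rfl, rfl, rfl, h⟩ | ⟨rfl, rfl, rfl, h⟩
    · rcases h3 with rfl | rfl
      · refine ⟨((0, 0, 0), (c2, c3, (a + c1 - b) / 6)), ?_, ?_⟩
        · refine Or.inl ⟨rfl, rfl, Or.inl rfl, ?_, ?_, ?_⟩ <;> rw [abs_le] <;> dsimp only <;> omega
        · intro U V; simp only [Aff, zero_mul, add_zero, one_mul]; constructor <;> intro h <;> omega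
      · refine ⟨((0, 6, 0), (c2, c3 + a, (a + c1 - b) / 6)), ?_, ?_⟩
        · refine Or.inr (Or.inl ⟨rfl, rfl, rfl, ?_, ?_, ?_⟩) <;> rw [abs_le] <;> dsimp only <;> omega
        · intro U V; simp only [Aff, zero_mul, add_zero, one_mul]; constructor <;> intro h <;> omega
    · refine ⟨((6, 0, 0), (c2, c3, (a + c1 - b) / 6)), ?_, ?_⟩
      · refine Or.inr (Or.inr ⟨rfl, rfl, rfl, ?_, ?_, ?_⟩) <;> rw [abs_le] <;> dsimp only <;> omega
      · intro U V; simp only [Aff, zero_mul, add_zero, one_mul]; constructor <;> intro h <;> omega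
    · refine ⟨((0, 0, 1), (c2, c3, (a + c1 - b) / 6)), ?_, ?_⟩
      · refine Or.inl ⟨rfl, rfl, Or.inr rfl, ?_, ?_, ?_⟩ <;> rw [abs_le] <;> dsimp only <;> omega
      · intro U V; simp only [Aff, zero_mul, add_zero, one_mul]; constructor <;> intro h <;> omega
  · right
    intro U V
    rcases hs with ⟨rfl, rfl, h3, h⟩ | ⟨rfl, rfl, rfl, h⟩ | ⟨rfl, rfl, rfl, h⟩ <;>
      simp only [Aff] <;> omega

/-- The family of relations on words. -/
def Rel (e₁ e₂ b₁ b₂ : Prop) (s : St) : Set (List D × List D) :=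
  {p | (e₁ → p.1 = []) ∧ (e₂ → p.2 = []) ∧ ok dig b₁ p.1 ∧ ok dig b₂ p.2 ∧
    Aff s (val dig p.1) (val dig p.2)}

/-- The finite family of languages of convolutions. -/
def fam : Set (Language (Option D × Option D)) :=
  {convLang ∅} ∪ (fun t : (Prop × Prop × Prop × Prop) × St =>
    convLang (Rel dig t.1.1 t.1.2.1 t.1.2.2.1 t.1.2.2.2 t.2)) '' (Set.univ ×ˢ {s | Valid s})

lemma fam_finite : (fam dig).Finite :=
  (Set.finite_singleton _).union ((Set.finite_univ.prod valid_finite).image _)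

lemma fam_empty : convLang ∅ ∈ fam dig := Or.inl rfl

lemma fam_rel (e₁ e₂ b₁ b₂ : Prop) (s : St) (hs : Valid s) :
    convLang (Rel dig e₁ e₂ b₁ b₂ s) ∈ fam dig :=
  Or.inr ⟨((e₁, e₂, b₁, b₂), s), ⟨trivial, hs⟩, rfl⟩

lemma fam_of_eq {P P' : Set (List D × List D)} (h : convLang P' ∈ fam dig) (e : P = P') :
    convLang P ∈ fam dig := e ▸ h

lemma rel_regular (hr : ∀ a, -2 ≤ dig a ∧ dig a ≤ 3)
    (s : St) (hs : Valid s) :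
    (convLang (Rel dig False False True True s)).IsRegular := by
  refine isRegular_of_family (fam dig) (fam_finite dig) ?_ _ (fam_rel dig _ _ _ _ s hs)
  clear hs s
  rintro K hK ⟨a, b⟩
  rcases hK with rfl | ⟨⟨⟨e₁, e₂, b₁, b₂⟩, s⟩, ⟨-, hs⟩, rfl⟩
  · refine ⟨_, fam_empty dig, fun y => ?_⟩
    rw [convLang_cons]
    simp [mem_convLang]
  refine ⟨_, ?_, fun y => convLang_cons _ _ _ _⟩
  simp only [Set.mem_ofPred_eq] at hs
  rcases a with _ | a <;> rcases b with _ | b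
  · refine fam_of_eq dig (fam_empty dig) ?_
    ext p; simp
  · by_cases he : e₂
    · refine fam_of_eq dig (fam_empty dig) ?_
      ext p; simp [Rel, he]
    rcases aff_step s hs 0 (dig b) (by norm_num) (hr b) with ⟨s', hs', h⟩ | h
    · refine fam_of_eq dig (fam_rel dig True False b₁ (dig b ≠ 0) s' hs') ?_
      ext ⟨u, v⟩
      have := h ⟨0, 0, 0⟩ (val dig v)
      simp only [mul_zero, add_zero] at this
      simp only [Rel, Set.mem_ofPred_eq, reduceCtorEq, he, false_and, exists_false, false_or,
        Option.some.injEq, true_and, exists_eq_left', false_imp_iff, true_imp_iff, imp_true_iff]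
      constructor
      · rintro ⟨rfl, h1, h2, h3⟩
        exact ⟨rfl, h1, h2, this.1 h3⟩
      · rintro ⟨rfl, h1, h2, h3⟩
        exact ⟨rfl, h1, h2, this.2 h3⟩
    · refine fam_of_eq dig (fam_empty dig) ?_
      ext ⟨u, v⟩
      have := h ⟨0, 0, 0⟩ (val dig v)
      simp only [mul_zero, add_zero] at this
      simp only [Rel, Set.mem_ofPred_eq, reduceCtorEq, he, false_and, exists_false, false_or,
        Option.some.injEq, true_and, exists_eq_left', false_imp_iff, imp_true_iff,
        Set.mem_empty_iff_false, iff_false]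
      rintro ⟨rfl, h1, h2, h3⟩
      exact this h3
  · by_cases he : e₁
    · refine fam_of_eq dig (fam_empty dig) ?_
      ext p; simp [Rel, he]
    rcases aff_step s hs (dig a) 0 (hr a) (by norm_num) with ⟨s', hs', h⟩ | h
    · refine fam_of_eq dig (fam_rel dig False True (dig a ≠ 0) b₂ s' hs') ?_
      ext ⟨u, v⟩
      have := h (val dig u) ⟨0, 0, 0⟩
      simp only [mul_zero, add_zero] at this
      simp only [Rel, Set.mem_ofPred_eq, reduceCtorEq, he, false_and, and_false, exists_false,
        false_or, or_false,
        Option.some.injEq, true_and, exists_eq_left', false_imp_iff, true_imp_iff, imp_true_iff]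
      constructor
      · rintro ⟨rfl, h1, h2, h3⟩
        exact ⟨rfl, h1, h2, this.1 h3⟩
      · rintro ⟨rfl, h1, h2, h3⟩
        exact ⟨rfl, h1, h2, this.2 h3⟩
    · refine fam_of_eq dig (fam_empty dig) ?_
      ext ⟨u, v⟩
      have := h (val dig u) ⟨0, 0, 0⟩
      simp only [mul_zero, add_zero] at this
      simp only [Rel, Set.mem_ofPred_eq, reduceCtorEq, he, false_and, and_false, exists_false,
        false_or, or_false,
        Option.some.injEq, true_and, exists_eq_left', false_imp_iff, imp_true_iff,
        Set.mem_empty_iff_false, iff_false]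
      rintro ⟨rfl, h1, h2, h3⟩
      exact this h3
  · by_cases he : e₁
    · refine fam_of_eq dig (fam_empty dig) ?_
      ext p; simp [Rel, he]
    by_cases he' : e₂
    · refine fam_of_eq dig (fam_empty dig) ?_
      ext p; simp [Rel, he']
    rcases aff_step s hs (dig a) (dig b) (hr a) (hr b) with ⟨s', hs', h⟩ | h
    · refine fam_of_eq dig (fam_rel dig False False (dig a ≠ 0) (dig b ≠ 0) s' hs') ?_
      ext ⟨u, v⟩
      have := h (val dig u) (val dig v)
      simp only [Rel, Set.mem_ofPred_eq, reduceCtorEq, he, he', false_and, and_false, exists_false,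
        or_false, Option.some.injEq, true_and, false_imp_iff]
      constructor
      · rintro ⟨_, _, rfl, rfl, h1, h2, h3⟩
        exact ⟨h1, h2, this.1 h3⟩
      · rintro ⟨h1, h2, h3⟩
        exact ⟨_, _, rfl, rfl, h1, h2, this.2 h3⟩
    · refine fam_of_eq dig (fam_empty dig) ?_
      ext ⟨u, v⟩
      have := h (val dig u) (val dig v)
      simp only [Rel, Set.mem_ofPred_eq, reduceCtorEq, he, he', false_and, and_false, exists_false,
        or_false, Option.some.injEq, true_and, false_imp_iff, Set.mem_empty_iff_false, iff_false]
      rintro ⟨_, _, rfl, rfl, h1, h2, h3⟩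
      exact this h3

end

/-! ### Word length -/

section
variable {G : Type*} [Group G] (A : Set G)

/-- `g` is represented by a word of length at most `n`. -/
def WL (n : ℕ) (g : G) : Prop := ∃ w : List (Alph A), eval A w = g ∧ w.length ≤ n

variable {A}

lemma eval_cons (a : Alph A) (w : List (Alph A)) : eval A (a :: w) = a.1 * eval A w :=
  List.prod_cons

lemma eval_append (u v : List (Alph A)) : eval A (u ++ v) = eval A u * eval A v := by
  induction u with
  | nil => exact (one_mul _).symm
  | cons a u ih => rw [List.cons_append, eval_cons, eval_cons, ih, mul_assoc]

lemma WL.wordLength_le {n : ℕ} {g : G} (h : WL A n g) : wordLength A g ≤ n := by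
  obtain ⟨w, hw, hn⟩ := h
  exact (Nat.sInf_le (show w.length ∈ {n | ∃ w : List (Alph A), eval A w = g ∧ w.length = n} from
    ⟨w, hw, rfl⟩)).trans hn

lemma WL.mul {m n : ℕ} {g h : G} (hg : WL A m g) (hh : WL A n h) : WL A (m + n) (g * h) := by
  obtain ⟨u, rfl, hu⟩ := hg
  obtain ⟨v, rfl, hv⟩ := hh
  exact ⟨u ++ v, eval_append u v, by simp; omega⟩

lemma WL.one : WL A 0 (1 : G) := ⟨[], rfl, le_rfl⟩

lemma WL.letter {g : G} (h : g ∈ A ∪ A⁻¹) : WL A 1 g :=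
  ⟨[⟨g, h⟩], (eval_cons _ _).trans (mul_one _), le_rfl⟩

lemma WL.pow {g : G} {m : ℕ} (h : WL A m g) (n : ℕ) : WL A (n * m) (g ^ n) := by
  induction n with
  | zero => simpa using WL.one
  | succ n ih =>
    rw [pow_succ, Nat.succ_mul]
    exact ih.mul h

lemma WL.zpow {g : G} (h : g ∈ A) (k : ℤ) : WL A k.natAbs (g ^ k) := by
  rcases Int.natAbs_eq k with e | e
  · conv_rhs => rw [e]
    rw [zpow_natCast]
    simpa using (WL.letter (Or.inl h)).pow k.natAbs
  · conv_rhs => rw [e]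
    rw [zpow_neg, zpow_natCast, ← inv_pow]
    simpa using (WL.letter (A := A) (g := g⁻¹) (Or.inr (by simpa using h))).pow k.natAbs

lemma WL.inv_eval (w : List (Alph A)) : WL A w.length (eval A w)⁻¹ := by
  induction w with
  | nil => exact ⟨[], (inv_one (G := G)).symm, le_rfl⟩
  | cons a w ih =>
    rw [eval_cons, mul_inv_rev]
    refine ih.mul (WL.letter ?_)
    rcases a.2 with h | h
    · exact Or.inr (by simpa using h)
    · exact Or.inl h

end

/-! ### The Heisenberg group -/

lemma Heis.s_zpow (k : ℤ) : Heis.s ^ k = ⟨k, 0, 0⟩ := by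
  induction k with
  | zero => rfl
  | succ n ih => rw [zpow_add_one, ih]; ext <;> simp [Heis.mul_def, Heis.s]
  | pred n ih =>
    rw [zpow_sub_one, ih]; ext <;> simp [Heis.mul_def, Heis.inv_def, Heis.s]; ring

lemma Heis.p_zpow (k : ℤ) : Heis.p ^ k = ⟨0, k, 0⟩ := by
  induction k with
  | zero => rfl
  | succ n ih => rw [zpow_add_one, ih]; ext <;> simp [Heis.mul_def, Heis.p]
  | pred n ih =>
    rw [zpow_sub_one, ih]; ext <;> simp [Heis.mul_def, Heis.inv_def, Heis.p]; ring

lemma Heis.q_zpow (k : ℤ) : Heis.q ^ k = ⟨0, 0, k⟩ := by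
  induction k with
  | zero => rfl
  | succ n ih => rw [zpow_add_one, ih]; ext <;> simp [Heis.mul_def, Heis.q]
  | pred n ih =>
    rw [zpow_sub_one, ih]; ext <;> simp [Heis.mul_def, Heis.inv_def, Heis.q]; ring

/-- The generating set. -/
abbrev gens : Set Heis := {Heis.s, Heis.p, Heis.q}

lemma Heis.WL (g : Heis) :
    WL gens (g.x.natAbs + g.y.natAbs + (g.z - g.x * g.y).natAbs) g := by
  have h := ((WL.zpow (A := gens) (g := Heis.s) (by simp) g.x).mul
    (WL.zpow (A := gens) (g := Heis.p) (by simp) g.y)).mul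
    (WL.zpow (A := gens) (g := Heis.q) (by simp) (g.z - g.x * g.y))
  have e : Heis.s ^ g.x * Heis.p ^ g.y * Heis.q ^ (g.z - g.x * g.y) = g := by
    rw [Heis.s_zpow, Heis.p_zpow, Heis.q_zpow]
    ext <;> simp [Heis.mul_def]
  rwa [e] at h

/-- Digits of letters: `s ↦ 1`, `s⁻¹ ↦ -1`, `p ↦ 2`, `p⁻¹ ↦ -2`, `q ↦ 3`, `q⁻¹ ↦ 0`. -/
def dig (a : Alph gens) : ℤ := if a.1.z = -1 then 0 else a.1.x + 2 * a.1.y + 3 * a.1.z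

lemma letter_cases (a : Alph gens) : a.1 = ⟨1, 0, 0⟩ ∨ a.1 = ⟨0, 1, 0⟩ ∨ a.1 = ⟨0, 0, 1⟩ ∨
    a.1 = ⟨-1, 0, 0⟩ ∨ a.1 = ⟨0, -1, 0⟩ ∨ a.1 = ⟨0, 0, -1⟩ := by
  rcases a.2 with (h | h | h) | (h | h | h)
  · exact Or.inl h
  · exact Or.inr (Or.inl h)
  · exact Or.inr (Or.inr (Or.inl h))
  · rw [inv_eq_iff_eq_inv] at h
    exact Or.inr (Or.inr (Or.inr (Or.inl h)))
  · rw [inv_eq_iff_eq_inv] at h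
    exact Or.inr (Or.inr (Or.inr (Or.inr (Or.inl h))))
  · rw [Set.mem_singleton_iff, inv_eq_iff_eq_inv] at h
    exact Or.inr (Or.inr (Or.inr (Or.inr (Or.inr h))))

lemma dig_range (a : Alph gens) : -2 ≤ dig a ∧ dig a ≤ 3 := by
  rcases letter_cases a with h | h | h | h | h | h <;> simp [dig, h]

lemma dig_inj : Function.Injective dig := by
  intro a b hab
  apply Subtype.ext
  rcases letter_cases a with h | h | h | h | h | h <;>
  rcases letter_cases b with h' | h' | h' | h' | h' | h' <;>
  simp [dig, h, h'] at hab ⊢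

lemma dig_surj (n : ℤ) (h1 : -2 ≤ n) (h2 : n ≤ 3) : ∃ a, dig a = n := by
  have hn : n = -2 ∨ n = -1 ∨ n = 0 ∨ n = 1 ∨ n = 2 ∨ n = 3 := by omega
  rcases hn with rfl | rfl | rfl | rfl | rfl | rfl
  · exact ⟨⟨Heis.p⁻¹, by simp⟩, by simp [dig, Heis.p, Heis.inv_def]⟩
  · exact ⟨⟨Heis.s⁻¹, by simp⟩, by simp [dig, Heis.s, Heis.inv_def]⟩
  · exact ⟨⟨Heis.q⁻¹, by simp⟩, by simp [dig, Heis.q, Heis.inv_def]⟩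
  · exact ⟨⟨Heis.s, by simp⟩, by simp [dig, Heis.s]⟩
  · exact ⟨⟨Heis.p, by simp⟩, by simp [dig, Heis.p]⟩
  · exact ⟨⟨Heis.q, by simp⟩, by simp [dig, Heis.q]⟩

lemma rel_regular_of (a : Heis) (s : St) (hs : Valid s)
    (h : ∀ U V : Heis, V = U * a ↔ Aff s U V) :
    IsRegularRel {p : List (Alph gens) × List (Alph gens) |
      p.1 ∈ lang dig True ∧ p.2 ∈ lang dig True ∧ val dig p.2 = val dig p.1 * a} := by
  have e : {p : List (Alph gens) × List (Alph gens) |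
      p.1 ∈ lang dig True ∧ p.2 ∈ lang dig True ∧ val dig p.2 = val dig p.1 * a} =
      Rel dig False False True True s := by
    ext p
    simp only [Rel, Set.mem_ofPred_eq, false_imp_iff, true_and, h]
    exact Iff.rfl
  rw [e]
  exact rel_regular dig dig_range s hs

lemma rep : IsCayleyAutomaticRep gens (lang dig True) (val dig) := by
  refine ⟨lang_regular dig, ⟨fun _ _ => trivial, ?_, ?_⟩, ?_⟩
  · intro u hu v hv h
    exact val_inj dig dig_range dig_inj _ _ u v hu hv h
  · intro V _
    obtain ⟨w, hw, h⟩ := val_surj dig dig_surj _ V le_rfl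
    exact ⟨w, hw, h⟩
  · rintro a (rfl | rfl | rfl)
    · refine rel_regular_of _ ((0, 0, 0), (1, 0, 0)) (by simp [Valid]) fun U V => ?_
      simp [Aff, Heis.ext_iff, Heis.mul_def, Heis.s]
    · refine rel_regular_of _ ((0, 0, 1), (0, 1, 0)) (by simp [Valid]) fun U V => ?_
      simp [Aff, Heis.ext_iff, Heis.mul_def, Heis.p]
    · refine rel_regular_of _ ((0, 0, 0), (0, 0, 1)) (by simp [Valid]) fun U V => ?_
      simp [Aff, Heis.ext_iff, Heis.mul_def, Heis.q]

lemma dist_bound (w : List (Alph gens)) :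
    cayleyDist gens (eval gens w) (val dig w) ≤ 5 * 36 ^ w.length := by
  refine ((WL.inv_eval w).mul (Heis.WL (val dig w))).wordLength_le.trans ?_
  obtain ⟨h1, h2, h3⟩ := val_bound dig dig_range w
  have hn : w.length < 6 ^ w.length := Nat.lt_pow_self (by norm_num)
  have h36 : 36 ^ w.length = 6 ^ w.length * 6 ^ w.length := by rw [← mul_pow]; norm_num
  rw [h36]
  generalize val dig w = g at *
  have hxy : |g.x * g.y| ≤ (6 ^ w.length - 1) * (6 ^ w.length - 1) := by
    rw [abs_mul]
    exact mul_le_mul h1 h2 (abs_nonneg _) ((abs_nonneg _).trans h1)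
  have hz := abs_sub g.z (g.x * g.y)
  zify
  have hn' : (w.length : ℤ) < 6 ^ w.length := by exact_mod_cast hn
  have hB : (1 : ℤ) ≤ 6 ^ w.length := one_le_pow₀ (by norm_num)
  generalize (6 : ℤ) ^ w.length = B at *
  nlinarith

end CAG

open CAG in
/-- The Heisenberg group `ℋ₃(ℤ)` belongs to the class `ℬ_𝔢`, where `𝔢(n) = exp n` is the
exponential function. -/
theorem heisenberg_mem_classB_exp :
    InB ({Heis.s, Heis.p, Heis.q} : Set Heis) expF := by
  refine ⟨lang dig True, val dig, rep, 5, 4, 1, by norm_num, by norm_num, by norm_num, le_rfl, ?_⟩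
  intro n _ w _ hw
  have h1 : (cayleyDist gens (eval gens w) (val dig w) : ℝ) ≤ 5 * 36 ^ w.length := by
    exact_mod_cast dist_bound w
  have h2 : (36 : ℝ) ^ w.length ≤ 36 ^ n := pow_le_pow_right₀ (by norm_num) hw
  have h3 : (36 : ℝ) ^ n ≤ Real.exp ((4 * n : ℕ) : ℝ) := by
    have e : Real.exp ((4 * n : ℕ) : ℝ) = ((Real.exp 1) ^ 4) ^ n := by
      rw [← pow_mul, ← Real.exp_nat_mul, mul_one]
    rw [e]
    refine pow_le_pow_left₀ (by norm_num) ?_ n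
    have h4 : (2.7 : ℝ) ≤ Real.exp 1 := by linarith [Real.exp_one_gt_d9]
    calc (36 : ℝ) ≤ 2.7 ^ 4 := by norm_num
      _ ≤ _ := pow_le_pow_left₀ (by norm_num) h4 4
  refine h1.trans ?_
  change _ ≤ ((5 : ℕ) : ℝ) * Real.exp ((4 * n : ℕ) : ℝ)
  push_cast at h3 ⊢
  linarith
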